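/- arXiv:2511.01067 — 3 statements merged into one kernel-verified Lean document; each statement's English description precedes it below -/
import Mathlib

section
/- Let α : ℝ → ℝ be continuous and strictly increasing with α(0) = 0 (an extended class-K function). Let h : ℝ → ℝ be differentiable and satisfy h(0) ≥ 0 and h'(t) ≥ −α(h(t)) for all t ≥ 0. Then h(t) ≥ 0 for all t ≥ 0. -/
open Set

/- Contact with the fence `x ↦ c - ε * (x - a + 1)` happens only strictly below `c`, where the slope
`-ε` of the fence is smaller than the derivative of `f`; then `ε` is sent to zero. -/
theorem le_image_of_deriv_right_nonneg_of_lt {f f' : ℝ → ℝ} {a b c : ℝ}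
    (hf : ContinuousOn f (Icc a b)) (hf' : ∀ x ∈ Ico a b, HasDerivWithinAt f (f' x) (Ici x) x)
    (ha : c ≤ f a) (bound : ∀ x ∈ Ico a b, f x < c → 0 ≤ f' x) :
    ∀ ⦃x⦄, x ∈ Icc a b → c ≤ f x := by
  have fence_le : ∀ ε > 0, ∀ ⦃x⦄, x ∈ Icc a b → c - ε * (x - a + 1) ≤ f x := by
    intro ε hε
    have fence_deriv (x : ℝ) : HasDerivAt (fun y ↦ c - ε * (y - a + 1)) (-ε) x := by
      simpa using ((((hasDerivAt_id x).sub_const a).add_const 1).const_mul ε).const_sub c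
    refine image_le_of_deriv_right_lt_deriv_boundary'
      (fun x _ ↦ (fence_deriv x).continuousAt.continuousWithinAt)
      (fun x _ ↦ (fence_deriv x).hasDerivWithinAt) ?_ hf hf' ?_
    · linarith
    · intro x hx contact
      have fence_drop : 0 < ε * (x - a + 1) := mul_pos hε (by linarith [hx.1])
      have deriv_nonneg : 0 ≤ f' x := bound x hx (by linarith)
      linarith
  intro x hx
  have length_pos : 0 < x - a + 1 := by linarith [hx.1]
  refine le_of_forall_pos_le_add fun δ hδ ↦ ?_
  have fence_at_x := fence_le (δ / (x - a + 1)) (div_pos hδ length_pos) hx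
  rw [div_mul_cancel₀ δ length_pos.ne'] at fence_at_x
  exact sub_le_iff_le_add.mp fence_at_x

theorem barrier_comparison_nonneg_general {α h h' : ℝ → ℝ} {a b : ℝ}
    (hα : ∀ r < 0, α r ≤ 0) (hcont : ContinuousOn h (Icc a b))
    (hderiv : ∀ t ∈ Ico a b, HasDerivWithinAt h (h' t) (Ici t) t) (hinit : 0 ≤ h a)
    (hineq : ∀ t ∈ Ico a b, -α (h t) ≤ h' t) :
    ∀ ⦃t⦄, t ∈ Icc a b → 0 ≤ h t :=
  le_image_of_deriv_right_nonneg_of_lt hcont hderiv hinit fun t ht hneg ↦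
    (neg_nonneg.mpr (hα (h t) hneg)).trans (hineq t ht)

/-- Scalar comparison lemma behind forward invariance. If `α : ℝ → ℝ` is a
continuous, strictly increasing extended class-K function (`α 0 = 0`), `h : ℝ → ℝ` is
differentiable with `h 0 ≥ 0` and `h' t ≥ −α (h t)` for all `t ≥ 0`, then `h t ≥ 0` for
all `t ≥ 0`. -/
theorem barrier_comparison_nonneg
    (α : ℝ → ℝ) (hαc : Continuous α) (hαm : StrictMono α) (hα0 : α 0 = 0)
    (h : ℝ → ℝ) (hdiff : Differentiable ℝ h) (hinit : 0 ≤ h 0)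
    (hineq : ∀ t ≥ (0 : ℝ), -α (h t) ≤ deriv h t) :
    ∀ t ≥ (0 : ℝ), 0 ≤ h t := by
  intro t ht
  exact barrier_comparison_nonneg_general (fun _ hr ↦ hα0 ▸ hαm.monotone hr.le)
    hdiff.continuous.continuousOn (fun s _ ↦ (hdiff s).hasDerivAt.hasDerivWithinAt) hinit
    (fun s hs ↦ hineq s hs.1) (right_mem_Icc.mpr ht)
end

section
/- Let m ≥ 1 and let α_0, …, α_{m−1} : ℝ → ℝ each be continuous and strictly increasing with α_i(0) = 0 (extended class-K functions). Let ψ_0, …, ψ_m : ℝ → ℝ be such that ψ_0, …, ψ_{m−1} are differentiable and ψ_i(t) = ψ_{i−1}'(t) + α_{i−1}(ψ_{i−1}(t)) for all t and each i = 1, …, m. If ψ_m(t) ≥ 0 for all t ≥ 0 and ψ_i(0) ≥ 0 for each i = 0, …, m−1, then ψ_i(t) ≥ 0 for all t ≥ 0 and every i = 0, …, m. In particular, the trajectory remains in the intersection of the zero-superlevel sets of ψ_0, …, ψ_m. -/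
/-!
Wherever `ψ i` is negative, `α i (ψ i t) ≤ 0`, so `0 ≤ ψ (i + 1) t` forces the derivative of `ψ i`
to be nonnegative there. A function that starts nonnegative and never decreases while negative
stays nonnegative, so nonnegativity descends the chain from `ψ m` to `ψ 0`.
-/

open Set

section RightDerivative

variable {f f' : ℝ → ℝ} {a b : ℝ}

-- The slack `ε` at `x = a` makes `f x < c` strict at a contact point, and the slope `-ε` turns
-- `0 ≤ f' x` into the strict inequality that the fencing lemma requires.
lemma sub_mul_le_of_deriv_right_nonneg_of_lt {c ε : ℝ} (hε : 0 < ε)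
    (hf : ContinuousOn f (Icc a b))
    (hf' : ∀ x ∈ Ico a b, HasDerivWithinAt f (f' x) (Ici x) x) (ha : c ≤ f a)
    (hnonneg : ∀ x ∈ Ico a b, f x < c → 0 ≤ f' x) :
    ∀ x ∈ Icc a b, c - ε * (1 + (x - a)) ≤ f x := by
  have hfence (x : ℝ) : HasDerivAt (fun y ↦ c - ε * (1 + (y - a))) (-ε) x := by
    simpa using ((((hasDerivAt_id x).sub_const a).const_add 1).const_mul ε).const_sub c
  refine fun x hx ↦ image_le_of_deriv_right_lt_deriv_boundary'
    (fun y _ ↦ (hfence y).continuousAt.continuousWithinAt)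
    (fun y _ ↦ (hfence y).hasDerivWithinAt) (by linarith) hf hf' (fun y hy hcontact ↦ ?_) hx
  have hpos : 0 < ε * (1 + (y - a)) := mul_pos hε (by linarith [hy.1])
  linarith [hnonneg y hy (by linarith)]

lemma le_of_deriv_right_nonneg_of_lt {c : ℝ} (hf : ContinuousOn f (Icc a b))
    (hf' : ∀ x ∈ Ico a b, HasDerivWithinAt f (f' x) (Ici x) x) (ha : c ≤ f a)
    (hnonneg : ∀ x ∈ Ico a b, f x < c → 0 ≤ f' x) :
    ∀ x ∈ Icc a b, c ≤ f x := by
  intro x hx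
  have hpos : 0 < 1 + (x - a) := by linarith [hx.1]
  refine le_of_forall_pos_le_add fun δ hδ ↦ ?_
  have hfence :=
    sub_mul_le_of_deriv_right_nonneg_of_lt (div_pos hδ hpos) hf hf' ha hnonneg x hx
  rwa [div_mul_cancel₀ δ hpos.ne', sub_le_iff_le_add] at hfence

lemma nonneg_of_deriv_right_add_comp_nonneg {α : ℝ → ℝ} (hα : ∀ y < 0, α y ≤ 0)
    (hf : ContinuousOn f (Icc a b))
    (hf' : ∀ x ∈ Ico a b, HasDerivWithinAt f (f' x) (Ici x) x) (ha : 0 ≤ f a)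
    (hnonneg : ∀ x ∈ Ico a b, 0 ≤ f' x + α (f x)) :
    ∀ x ∈ Icc a b, 0 ≤ f x :=
  le_of_deriv_right_nonneg_of_lt hf hf' ha fun x hx hneg ↦ by
    linarith [hnonneg x hx, hα (f x) hneg]

end RightDerivative

theorem high_order_ubf_chain_forward_invariance_general {m : ℕ} {α ψ ψ' : ℕ → ℝ → ℝ} {a b : ℝ}
    (hα : ∀ i < m, ∀ y < 0, α i y ≤ 0)
    (hcont : ∀ i < m, ContinuousOn (ψ i) (Icc a b))
    (hderiv : ∀ i < m, ∀ t ∈ Ico a b, HasDerivWithinAt (ψ i) (ψ' i t) (Ici t) t)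
    (hrec : ∀ i < m, ∀ t ∈ Ico a b, ψ (i + 1) t = ψ' i t + α i (ψ i t))
    (htop : ∀ t ∈ Icc a b, 0 ≤ ψ m t) (hinit : ∀ i < m, 0 ≤ ψ i a) :
    ∀ i ≤ m, ∀ t ∈ Icc a b, 0 ≤ ψ i t := by
  intro i hi
  induction hi using Nat.decreasingInduction with
  | self => exact htop
  | of_succ k hk ih =>
    exact nonneg_of_deriv_right_add_comp_nonneg (hα k hk) (hcont k hk) (hderiv k hk) (hinit k hk)
      fun t ht ↦ hrec k hk t ht ▸ ih t (Ico_subset_Icc_self ht)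

/-- High Order UBF chain. Given extended class-K functions `α₀, …, α_{m−1}`
and functions `ψ₀, …, ψ_m : ℝ → ℝ` with `ψ₀, …, ψ_{m−1}` differentiable and
`ψ_{i+1} t = ψ_i' t + α_i (ψ_i t)`, if `ψ_m t ≥ 0` for all `t ≥ 0` and `ψ_i 0 ≥ 0` for
all `i < m`, then `ψ_i t ≥ 0` for all `t ≥ 0` and all `i ≤ m`; that is, the trajectory
remains in the intersection of the zero-superlevel sets of `ψ₀, …, ψ_m`. -/
theorem high_order_ubf_chain_forward_invariance
    (m : ℕ) (hm : 1 ≤ m) (α : ℕ → ℝ → ℝ)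
    (hαc : ∀ i < m, Continuous (α i)) (hαm : ∀ i < m, StrictMono (α i))
    (hα0 : ∀ i < m, α i 0 = 0)
    (ψ : ℕ → ℝ → ℝ) (hdiff : ∀ i < m, Differentiable ℝ (ψ i))
    (hrec : ∀ i < m, ∀ t : ℝ, ψ (i + 1) t = deriv (ψ i) t + α i (ψ i t))
    (htop : ∀ t ≥ (0 : ℝ), 0 ≤ ψ m t) (hinit : ∀ i < m, 0 ≤ ψ i 0) :
    ∀ i ≤ m, ∀ t ≥ (0 : ℝ), 0 ≤ ψ i t := by
  exact fun i hi t ht ↦ high_order_ubf_chain_forward_invariance_general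
    (fun j hj y hy ↦ hα0 j hj ▸ (hαm j hj hy).le) (fun j hj ↦ (hdiff j hj).continuous.continuousOn)
    (fun j hj s _ ↦ (hdiff j hj s).hasDerivAt.hasDerivWithinAt) (fun j hj s _ ↦ hrec j hj s)
    (fun s hs ↦ htop s hs.1) hinit i hi t (right_mem_Icc.2 ht)
end

section
/- For (x_1, x_2) ∈ ℝ² with 0 < x_1 < 1 and 0 ≤ x_2 ≤ x_1²/2, consider the quadratic program minimizing (1/2)·uᵀu over u = (u_1, u_2, u_3, u_4) ∈ ℝ⁴ subject to the four linear constraints −u_2 + u_3 ≥ 1, u_2 + u_3 ≥ 1, −u_1 + u_3 ≥ 1, and u_1 + u_3 + x_1·u_4 ≥ 1 + x_2. Then the vector u(x) = (0, 0, 1, x_2/x_1) is feasible and is the unique minimizer of this quadratic program. -/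
/-- The feasible set of Robinson's parametric quadratic program: the four linear
constraints `−u₂ + u₃ ≥ 1`, `u₂ + u₃ ≥ 1`, `−u₁ + u₃ ≥ 1`, `u₁ + u₃ + x₁·u₄ ≥ 1 + x₂`
(indices 0-based in Lean). -/
def RobinsonFeasible (x₁ x₂ : ℝ) (u : Fin 4 → ℝ) : Prop :=
  1 ≤ -u 1 + u 2 ∧ 1 ≤ u 1 + u 2 ∧ 1 ≤ -u 0 + u 2 ∧ 1 + x₂ ≤ u 0 + u 2 + x₁ * u 3

/-!
Minimizing `uᵀu / 2` under linear constraints is a convex problem, so a Karush–Kuhn–Tucker point is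
the unique minimizer: if `u = Aᵀμ` with `μ ≥ 0` and `μᵀ(Au - b) = 0`, then every feasible `v`
satisfies `uᵀu = μᵀAu = μᵀb ≤ μᵀAv = uᵀv`, whence `vᵀv - uᵀu ≥ (v - u)ᵀ(v - u)`. For Robinson's
program all four constraints are active at `u(x)`. With `t = x₂ / x₁²`, the multipliers are
`(1/2 - t, 1/2 - t, t, t)`, and they are nonnegative exactly when `0 ≤ x₂ ≤ x₁² / 2`.
-/

open Matrix

section MinimumNorm

variable {m n R : Type*} [Fintype m] [Fintype n] [CommRing R] [LinearOrder R]
  [IsStrictOrderedRing R]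

theorem dotProduct_self_lt_of_dotProduct_self_le {u v : n → R} (huv : u ⬝ᵥ u ≤ u ⬝ᵥ v)
    (hne : v ≠ u) : u ⬝ᵥ u < v ⬝ᵥ v := by
  have hpos : 0 < (v - u) ⬝ᵥ (v - u) :=
    (Finset.sum_nonneg fun i _ ↦ mul_self_nonneg _).lt_of_ne'
      (dotProduct_self_eq_zero.not.mpr (sub_ne_zero.mpr hne))
  have hexpand : (v - u) ⬝ᵥ (v - u) = v ⬝ᵥ v - 2 * (u ⬝ᵥ v) + u ⬝ᵥ u := by
    rw [sub_dotProduct, dotProduct_sub, dotProduct_sub, dotProduct_comm v u]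
    ring
  linarith

theorem dotProduct_self_lt_of_kkt {A : Matrix m n R} {b μ : m → R} {u v : n → R} (hμ : 0 ≤ μ)
    (hstationary : μ ᵥ* A = u) (hslack : μ ⬝ᵥ (A *ᵥ u) = μ ⬝ᵥ b) (hv : b ≤ A *ᵥ v)
    (hne : v ≠ u) : u ⬝ᵥ u < v ⬝ᵥ v := by
  refine dotProduct_self_lt_of_dotProduct_self_le ?_ hne
  calc
    u ⬝ᵥ u = μ ⬝ᵥ (A *ᵥ u) := by rw [dotProduct_mulVec, hstationary]
    _ = μ ⬝ᵥ b := hslack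
    _ ≤ μ ⬝ᵥ (A *ᵥ v) := dotProduct_le_dotProduct_of_nonneg_left hv hμ
    _ = u ⬝ᵥ v := by rw [dotProduct_mulVec, hstationary]

end MinimumNorm

/-- The constraint matrix `A(x)` of Robinson's quadratic program `A(x) u ≥ b(x)`. -/
def robinsonMatrix (x₁ : ℝ) : Matrix (Fin 4) (Fin 4) ℝ :=
  !![0, -1, 1, 0; 0, 1, 1, 0; -1, 0, 1, 0; 1, 0, 1, x₁]

/-- The right-hand side `b(x)` of Robinson's quadratic program `A(x) u ≥ b(x)`. -/
def robinsonBound (x₂ : ℝ) : Fin 4 → ℝ :=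
  ![1, 1, 1, 1 + x₂]

/-- Lagrange multipliers for the four constraints of Robinson's quadratic program at the point
`(0, 0, 1, x₂ / x₁)`, meaningful for `x₁ ≠ 0`. -/
noncomputable def robinsonMultiplier (x₁ x₂ : ℝ) : Fin 4 → ℝ :=
  ![2⁻¹ - x₂ / x₁ ^ 2, 2⁻¹ - x₂ / x₁ ^ 2, x₂ / x₁ ^ 2, x₂ / x₁ ^ 2]

section Robinson

variable {x₁ x₂ : ℝ}

theorem robinsonFeasible_iff_le_mulVec {u : Fin 4 → ℝ} :
    RobinsonFeasible x₁ x₂ u ↔ robinsonBound x₂ ≤ robinsonMatrix x₁ *ᵥ u := by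
  simp [RobinsonFeasible, robinsonBound, robinsonMatrix, Pi.le_def, Fin.forall_fin_succ,
    dotProduct, Fin.sum_univ_four]

theorem robinsonMatrix_mulVec_minimizer (hx₁ : x₁ ≠ 0) :
    robinsonMatrix x₁ *ᵥ ![0, 0, 1, x₂ / x₁] = robinsonBound x₂ := by
  ext i
  fin_cases i <;> simp [robinsonMatrix, robinsonBound, div_mul_cancel₀ x₂ hx₁]

theorem robinsonMultiplier_vecMul (hx₁ : x₁ ≠ 0) :
    robinsonMultiplier x₁ x₂ ᵥ* robinsonMatrix x₁ = ![0, 0, 1, x₂ / x₁] := by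
  have hratio_mul : x₂ / x₁ ^ 2 * x₁ = x₂ / x₁ := by field_simp
  have hsum : 2⁻¹ - x₂ / x₁ ^ 2 + (2⁻¹ - x₂ / x₁ ^ 2) + x₂ / x₁ ^ 2 + x₂ / x₁ ^ 2 = 1 := by
    ring
  ext i
  fin_cases i <;>
    simp [robinsonMultiplier, robinsonMatrix, vecMul, dotProduct, Fin.sum_univ_four, hratio_mul,
      hsum]

theorem robinsonMultiplier_nonneg (hx₁ : x₁ ≠ 0) (hx₂ : 0 ≤ x₂) (hx₂_le : x₂ ≤ x₁ ^ 2 / 2) :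
    0 ≤ robinsonMultiplier x₁ x₂ := by
  have hratio_nonneg : 0 ≤ x₂ / x₁ ^ 2 := by positivity
  have hratio_le : x₂ / x₁ ^ 2 ≤ 2⁻¹ := by
    rw [div_le_iff₀ (by positivity)]
    linarith
  simp [robinsonMultiplier, Pi.le_def, Fin.forall_fin_succ, hratio_nonneg, hratio_le]

theorem robinson_qp_unique_minimizer_general (hx₁ : x₁ ≠ 0) (hx₂ : 0 ≤ x₂)
    (hx₂_le : x₂ ≤ x₁ ^ 2 / 2) :
    RobinsonFeasible x₁ x₂ ![0, 0, 1, x₂ / x₁] ∧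
    ∀ v : Fin 4 → ℝ, RobinsonFeasible x₁ x₂ v → v ≠ ![0, 0, 1, x₂ / x₁] →
      (1 / 2) * ∑ i, (![0, 0, 1, x₂ / x₁] : Fin 4 → ℝ) i ^ 2 <
        (1 / 2) * ∑ i, v i ^ 2 := by
  have hactive := robinsonMatrix_mulVec_minimizer (x₂ := x₂) hx₁
  refine ⟨robinsonFeasible_iff_le_mulVec.mpr hactive.ge, fun v hv hne ↦ ?_⟩
  have hlt := dotProduct_self_lt_of_kkt (robinsonMultiplier_nonneg hx₁ hx₂ hx₂_le)
    (robinsonMultiplier_vecMul hx₁) (congrArg (_ ⬝ᵥ ·) hactive)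
    (robinsonFeasible_iff_le_mulVec.mp hv) hne
  simp only [dotProduct, ← sq] at hlt
  gcongr

end Robinson

/-- On the domain `0 < x₁ < 1`, `0 ≤ x₂ ≤ x₁²/2`, the vector
`u(x) = (0, 0, 1, x₂/x₁)` is feasible for Robinson's quadratic program and is its unique
minimizer for the objective `(1/2)·uᵀu`. -/
theorem robinson_qp_unique_minimizer
    (x₁ x₂ : ℝ) (h₁ : 0 < x₁) (h₁' : x₁ < 1) (h₂ : 0 ≤ x₂) (h₂' : x₂ ≤ x₁ ^ 2 / 2) :
    RobinsonFeasible x₁ x₂ ![0, 0, 1, x₂ / x₁] ∧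
    ∀ v : Fin 4 → ℝ, RobinsonFeasible x₁ x₂ v → v ≠ ![0, 0, 1, x₂ / x₁] →
      (1 / 2) * ∑ i, (![0, 0, 1, x₂ / x₁] : Fin 4 → ℝ) i ^ 2 <
        (1 / 2) * ∑ i, v i ^ 2 :=
  robinson_qp_unique_minimizer_general h₁.ne' h₂ h₂'
end
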